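/- arXiv:1805.06581 — 2 statements merged into one kernel-verified Lean document; each statement's English description precedes it below -/
import Mathlib

section
/- Let w be a fully commutative element of a Coxeter group and suppose w has a reduced word of the form s t w' with l(w) = l(w') + 2 and m(s,t) ≥ 3. Then in the coset decomposition w = w_I · ᴵw with respect to I = {s,t}, the factor w_I is not the longest element of W_I; consequently w lies in a left {s,t}-string and the lower left star operation applied to w yields t w' (i.e., it removes the leftmost letter s). -/
open CoxeterSystem

def CommStep {B : Type*} (M : CoxeterMatrix B) (l l' : List B) : Prop :=
  ∃ (u v : List B) (a b : B), M a b = 2 ∧ l = u ++ a :: b :: v ∧ l' = u ++ b :: a :: v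

def CommEquiv {B : Type*} (M : CoxeterMatrix B) : List B → List B → Prop :=
  Relation.ReflTransGen fun l l' => CommStep M l l' ∨ CommStep M l' l

def FullyCommutative {B W : Type*} [Group W] {M : CoxeterMatrix B}
    (cs : CoxeterSystem M W) (w : W) : Prop :=
  ∀ l l', cs.IsReduced l → cs.wordProd l = w → cs.IsReduced l' → cs.wordProd l' = w →
    CommEquiv M l l'

/-- `u` is the factor `w_I` in the coset decomposition `x = w_I · ᴵx` with respect to the
set of generators `I`: it lies in the parabolic subgroup `W_I`, its complement `u⁻¹ * x`
has no left descent in `I`, and lengths are additive. -/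
def CosetFactor {B W : Type*} [Group W] {M : CoxeterMatrix B}
    (cs : CoxeterSystem M W) (I : Set B) (u x : W) : Prop :=
  u ∈ Subgroup.closure (cs.simple '' I) ∧
  (∀ i ∈ I, ¬ cs.IsLeftDescent (u⁻¹ * x) i) ∧
  cs.length x = cs.length u + cs.length (u⁻¹ * x)

/-! ### Restricting words to two non-commuting letters -/

theorem CommStep.filter_eq {B : Type*} [DecidableEq B] {M : CoxeterMatrix B} {a b : B}
    (hab : M a b ≠ 2) {l l' : List B} (h : CommStep M l l') :
    l.filter (fun x => x = a ∨ x = b) = l'.filter (fun x => x = a ∨ x = b) := by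
  obtain ⟨u, v, c, d, hcd, rfl, rfl⟩ := h
  have hcd' : M d c = 2 := by rw [M.symmetric]; exact hcd
  have h1 : ∀ x, M x x ≠ 2 := fun x => by simp
  have hba : M b a ≠ 2 := by rwa [M.symmetric]
  simp only [List.filter_append, List.filter_cons]
  by_cases hc : c = a ∨ c = b <;> by_cases hd : d = a ∨ d = b
  · exfalso
    rcases hc with rfl | rfl <;> rcases hd with rfl | rfl
    · exact h1 _ hcd
    · exact hab hcd
    · exact hba hcd
    · exact h1 _ hcd
  all_goals simp [hc, hd]

theorem CommEquiv.filter_eq {B : Type*} [DecidableEq B] {M : CoxeterMatrix B} {a b : B}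
    (hab : M a b ≠ 2) {l l' : List B} (h : CommEquiv M l l') :
    l.filter (fun x => x = a ∨ x = b) = l'.filter (fun x => x = a ∨ x = b) := by
  induction h with
  | refl => rfl
  | tail _ h ih => exact ih.trans (h.elim (·.filter_eq hab) fun h => (h.filter_eq hab).symm)

namespace CoxeterSystem

variable {B W : Type*} [Group W] {M : CoxeterMatrix B} (cs : CoxeterSystem M W)

/-- A fully commutative element with a reduced word starting with `a` has no left descent at
a letter which does not commute with `a`. -/
theorem not_isLeftDescent_of_fullyCommutative {a b : B} (hab : 3 ≤ M a b) {l : List B}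
    (hred : cs.IsReduced (a :: l)) (hfc : FullyCommutative cs (cs.wordProd (a :: l))) :
    ¬ cs.IsLeftDescent (cs.wordProd (a :: l)) b := by
  classical
  intro h
  obtain ⟨r, hr, hrw⟩ := cs.exists_isReduced (cs.simple b * cs.wordProd (a :: l))
  have hprod : cs.wordProd (b :: r) = cs.wordProd (a :: l) := by
    rw [cs.wordProd_cons, ← hrw, cs.simple_mul_simple_cancel_left]
  have hbr : cs.IsReduced (b :: r) := by
    rw [cs.isLeftDescent_iff, hrw, hr.eq] at h
    rw [IsReduced, hprod, ← h, List.length_cons]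
  have heq := (hfc _ _ hred rfl hbr hprod).filter_eq (a := a) (b := b) (by omega)
  have hne : a = b := by simpa using congrArg List.head? heq
  subst hne
  simp at hab

/-! ### The geometric representation -/

/-- The coroot of the simple reflection `i` in the geometric representation. -/
noncomputable def coroot (M : CoxeterMatrix B) (i : B) : Module.Dual ℝ (B →₀ ℝ) :=
  Finsupp.linearCombination ℝ fun j => -2 * Real.cos (Real.pi / M i j)

theorem coroot_single (M : CoxeterMatrix B) (i j : B) :
    coroot M i (Finsupp.single j 1) = -2 * Real.cos (Real.pi / M i j) := by
  simp [coroot]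

theorem coroot_self (M : CoxeterMatrix B) (i : B) : coroot M i (Finsupp.single i 1) = 2 := by
  simp [coroot_single]

/-- The action of the simple reflection `i` in the geometric representation. -/
noncomputable def geomReflection (M : CoxeterMatrix B) (i : B) :
    (B →₀ ℝ) ≃ₗ[ℝ] (B →₀ ℝ) :=
  Module.reflection (coroot_self M i)

theorem coroot_mul_coroot_sub_two (M : CoxeterMatrix B) (i j : B) :
    2 * Real.cos (2 * Real.pi / M i j) =
      coroot M i (Finsupp.single j 1) * coroot M j (Finsupp.single i 1) - 2 := by
  rw [coroot_single, coroot_single, M.symmetric j i, mul_div_assoc, Real.cos_two_mul]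
  ring

theorem sin_two_pi_div_pos {m : ℕ} (hm : 3 ≤ m) : 0 < Real.sin (2 * Real.pi / m) := by
  have h3 : (3 : ℝ) ≤ m := by exact_mod_cast hm
  apply Real.sin_pos_of_pos_of_lt_pi
  · positivity
  · rw [div_lt_iff₀ (by linarith)]
    nlinarith [Real.pi_pos]

open Polynomial.Chebyshev in
theorem geomReflection_isLiftable (M : CoxeterMatrix B) : M.IsLiftable (geomReflection M) := by
  intro i j
  rcases eq_or_ne i j with rfl | hij
  · simp only [M.diagonal, pow_one]
    ext1 x
    exact Module.involutive_reflection (coroot_self M i) x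
  have h1 : M i j ≠ 1 := by
    intro h
    exact M.off_diagonal i j hij h
  apply LinearEquiv.toLinearMap_injective
  apply LinearMap.ext
  intro z
  have key := Module.reflection_mul_reflection_pow_apply (coroot_self M i) (coroot_self M j)
    (M i j) z _ (coroot_mul_coroot_sub_two M i j)
  refine key.trans ?_
  clear key
  rcases (by omega : M i j = 0 ∨ M i j = 2 ∨ 3 ≤ M i j) with h | h | h
  · rw [h]
    simp
  · have h' : M j i = 2 := by rw [M.symmetric, h]
    simp [coroot_single, h, h']
    module
  · have hs := (sin_two_pi_div_pos h).ne'
    have hm : (M i j : ℝ) ≠ 0 := by positivity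
    set θ : ℝ := 2 * Real.pi / M i j with hθ
    have hS : ∀ n : ℤ, (S ℝ n).eval (2 * Real.cos θ) = Real.sin ((n + 1) * θ) / Real.sin θ :=
      fun n => by rw [eq_div_iff hs, S_two_mul_real_cos]
    rcases Nat.even_or_odd' (M i j) with ⟨q, hq | hq⟩
    · have e1 : (((M i j : ℕ) : ℤ) - 2) / 2 = q - 1 := by omega
      have e2 : (((M i j : ℕ) : ℤ) - 1) / 2 = q - 1 := by omega
      have e3 : (S ℝ (q - 1)).eval (2 * Real.cos θ) = 0 := by
        rw [hS]
        have : ((((q : ℤ) - 1 : ℤ) : ℝ) + 1) * θ = Real.pi := by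
          have hq' : (M i j : ℝ) = 2 * q := by exact_mod_cast hq
          rw [hθ]
          field_simp
          push_cast
          linarith
        rw [this]
        simp
      rw [e1, e2, e3]
      simp
    · have e1 : (((M i j : ℕ) : ℤ) - 2) / 2 = q - 1 := by omega
      have e2 : (((M i j : ℕ) : ℤ) - 1) / 2 = q := by omega
      have e3 : (((M i j : ℕ) : ℤ) - 3) / 2 = q - 1 := by omega
      have e4 : ((M i j : ℕ) : ℤ) / 2 = q := by omega
      have e5 : (S ℝ q).eval (2 * Real.cos θ) + (S ℝ (q - 1)).eval (2 * Real.cos θ) = 0 := by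
        rw [hS, hS]
        have : (((q : ℤ) : ℝ) + 1) * θ = 2 * Real.pi - ((((q : ℤ) - 1 : ℤ) : ℝ) + 1) * θ := by
          have hq' : (M i j : ℝ) = 2 * q + 1 := by exact_mod_cast hq
          rw [hθ]
          field_simp
          push_cast
          linear_combination -hq'
        rw [this, Real.sin_two_pi_sub]
        ring
      rw [e1, e2, e3, e4, e5]
      simp

/-- The geometric representation of a Coxeter group. -/
noncomputable def geomRep : W →* ((B →₀ ℝ) ≃ₗ[ℝ] (B →₀ ℝ)) :=
  cs.lift ⟨geomReflection M, geomReflection_isLiftable M⟩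

theorem geomRep_simple (i : B) : cs.geomRep (cs.simple i) = geomReflection M i :=
  cs.lift_apply_simple _ _

/-- A product of two simple reflections `i`, `j` has order at least `M i j`. -/
theorem simple_mul_simple_pow_ne_one {i j : B} (hm : 3 ≤ M i j) {k : ℕ} (hk : 0 < k)
    (hkm : k < M i j) : (cs.simple i * cs.simple j) ^ k ≠ 1 := by
  intro h
  have hij : i ≠ j := by
    rintro rfl
    simp at hm
  have key := Module.reflection_mul_reflection_pow_apply_self (coroot_self M i) (coroot_self M j)
    k _ (coroot_mul_coroot_sub_two M i j)
  have hrep := congrArg cs.geomRep h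
  rw [map_pow, map_mul, geomRep_simple, geomRep_simple, map_one, geomReflection,
    geomReflection] at hrep
  rw [hrep] at key
  have hi := DFunLike.congr_fun key i
  have hj := DFunLike.congr_fun key j
  have hs := sin_two_pi_div_pos hm
  have hm3 : (3 : ℝ) ≤ M i j := by exact_mod_cast hm
  have hcos : 0 < Real.cos (Real.pi / M i j) := by
    apply Real.cos_pos_of_mem_Ioo
    constructor
    · have : 0 < Real.pi / M i j := by positivity
      linarith [Real.pi_pos]
    · rw [div_lt_iff₀ (by linarith)]
      nlinarith [Real.pi_pos]
  set θ : ℝ := 2 * Real.pi / M i j with hθ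
  have hc0 : coroot M j (Finsupp.single i 1) ≠ 0 := by
    rw [coroot_single, M.symmetric]
    linarith
  have h0 := Polynomial.Chebyshev.S_two_mul_real_cos θ k
  have h1 := Polynomial.Chebyshev.S_two_mul_real_cos θ (k - 1)
  simp [hij, hij.symm, hc0] at hi hj
  rw [hj] at h1 hi
  rw [add_zero] at hi
  rw [← hi] at h0
  push_cast at h0 h1
  have h1' : Real.sin (k * θ) = 0 := by
    rw [← (by ring : ((k : ℝ) - 1 + 1) * θ = k * θ), ← h1, zero_mul]
  rw [add_mul, one_mul, one_mul, Real.sin_add, h1', zero_mul, zero_add] at h0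
  have h2 : Real.cos (k * θ) = 1 := mul_right_cancel₀ hs.ne' (by rw [← h0, one_mul])
  have hk' : (k : ℝ) < M i j := by exact_mod_cast hkm
  have hk0 : (0 : ℝ) < k := by exact_mod_cast hk
  have hpos : 0 < k * θ := by
    rw [hθ]
    positivity
  have hlt : k * θ < 2 * Real.pi := by
    rw [hθ, mul_div_assoc', div_lt_iff₀ (by linarith)]
    nlinarith [Real.pi_pos]
  exact hpos.ne' ((Real.cos_eq_one_iff_of_lt_of_lt (by linarith) hlt).1 h2)

/-- A simple reflection in a standard parabolic subgroup is indexed by one of its generators. -/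
theorem mem_of_simple_mem_closure {I : Set B} {c : B}
    (h : cs.simple c ∈ Subgroup.closure (cs.simple '' I)) : c ∈ I := by
  by_contra hc
  have key : ∀ w ∈ Subgroup.closure (cs.simple '' I), ∀ v, cs.geomRep w v c = v c := by
    intro w hw
    induction hw using Subgroup.closure_induction with
    | mem x hx =>
      obtain ⟨i, hi, rfl⟩ := hx
      intro v
      have hic : i ≠ c := fun h => hc (h ▸ hi)
      rw [geomRep_simple, geomReflection, Module.reflection_apply]
      simp [hic]
    | one => simp
    | mul x y _ _ hx hy =>
      intro v
      rw [map_mul, LinearEquiv.mul_apply, hx, hy]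
    | inv x _ hx =>
      intro v
      rw [← hx, ← LinearEquiv.mul_apply, ← map_mul, mul_inv_cancel, map_one]
      rfl
  have h1 := key _ h (Finsupp.single c 1)
  rw [geomRep_simple, geomReflection, Module.reflection_apply, coroot_self] at h1
  norm_num at h1

/-! ### Parity of the multiplicity of a reflection in an inversion sequence -/

open Classical in
/-- The action of a simple reflection on group elements carrying a sign. -/
noncomputable def signedConj (i : B) : Function.End (W × ZMod 2) := fun p =>
  (cs.simple i * p.1 * cs.simple i, p.2 + if p.1 = cs.simple i then 1 else 0)

open Classical in
theorem signedConj_word (ω : List B) (p : W × ZMod 2) :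
    (ω.map cs.signedConj).prod p =
      (cs.wordProd ω * p.1 * (cs.wordProd ω)⁻¹, p.2 + (cs.rightInvSeq ω).count p.1) := by
  induction ω with
  | nil => simp [Function.End.one_def]
  | cons i ω ih =>
    rw [List.map_cons, List.prod_cons]
    change cs.signedConj i ((ω.map cs.signedConj).prod p) = _
    rw [ih]
    have hiff : cs.wordProd ω * p.1 * (cs.wordProd ω)⁻¹ = cs.simple i ↔
        (cs.wordProd ω)⁻¹ * cs.simple i * cs.wordProd ω = p.1 := by
      constructor <;> intro h
      · rw [← h]; group
      · rw [← h]; group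
    simp only [signedConj, rightInvSeq, wordProd_cons, mul_inv_rev, inv_simple, hiff,
      List.count_cons, beq_iff_eq]
    push_cast
    simp only [mul_assoc, add_assoc]

theorem inv_mul_wordProd_alternatingWord (i j : B) (n : ℕ) :
    (cs.wordProd (alternatingWord i j n))⁻¹ * cs.simple (if Even n then j else i) *
      cs.wordProd (alternatingWord i j n) =
      cs.simple j * (cs.simple i * cs.simple j) ^ n := by
  induction n generalizing i j with
  | zero => simp [alternatingWord]
  | succ n ih =>
    have hsw : (if Even (n + 1) then j else i) = if Even n then i else j := by
      by_cases h : Even n <;> simp [Nat.even_add_one, h]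
    have := ih j i
    rw [hsw, alternatingWord_succ, wordProd_concat, mul_inv_rev, inv_simple]
    calc _ = cs.simple j * ((cs.wordProd (alternatingWord j i n))⁻¹ *
          cs.simple (if Even n then i else j) * cs.wordProd (alternatingWord j i n)) *
          cs.simple j := by simp only [mul_assoc]
      _ = _ := by
        rw [this]
        have : ∀ k : ℕ, (cs.simple j * cs.simple i) ^ k * cs.simple j =
            cs.simple j * (cs.simple i * cs.simple j) ^ k := by
          intro k
          induction k with
          | zero => simp
          | succ k ihk => rw [pow_succ', mul_assoc, ihk, pow_succ']; simp only [mul_assoc]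
        rw [pow_succ']
        simp only [mul_assoc]
        rw [this]

open Classical in
theorem count_rightInvSeq_alternatingWord (i j : B) (n : ℕ) (t : W) :
    ((cs.rightInvSeq (alternatingWord i j n)).count t : ZMod 2) =
      ∑ k ∈ Finset.range n,
        if cs.simple j * (cs.simple i * cs.simple j) ^ k = t then 1 else 0 := by
  induction n with
  | zero => simp [alternatingWord]
  | succ n ih =>
    rw [alternatingWord_succ', rightInvSeq, inv_mul_wordProd_alternatingWord,
      Finset.sum_range_succ, List.count_cons, ← ih]
    push_cast
    simp

theorem prod_map_alternatingWord {G : Type*} [Monoid G] (f : B → G) (i j : B) (n : ℕ) :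
    ((alternatingWord i j (2 * n)).map f).prod = (f i * f j) ^ n := by
  induction n with
  | zero => simp [alternatingWord]
  | succ n ih =>
    rw [(by ring : 2 * (n + 1) = 2 * n + 1 + 1), alternatingWord_succ', alternatingWord_succ',
      pow_succ', ← ih]
    simp [mul_assoc]

theorem signedConj_isLiftable : M.IsLiftable cs.signedConj := by
  classical
  intro i j
  rw [← prod_map_alternatingWord]
  funext p
  have hw : cs.wordProd (alternatingWord i j (2 * M i j)) = 1 := by
    rw [wordProd, prod_map_alternatingWord, simple_mul_simple_pow]
  rw [signedConj_word, hw, count_rightInvSeq_alternatingWord, two_mul, Finset.sum_range_add]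
  simp only [pow_add, simple_mul_simple_pow, one_mul, CharTwo.add_self_eq_zero]
  simp [Function.End.one_def]

open Classical in
/-- The parity of the multiplicity of `t` in the right inversion sequence of a word depends
only on the product of the word. -/
theorem count_rightInvSeq_eq {ω ω' : List B} (h : cs.wordProd ω = cs.wordProd ω') (t : W) :
    ((cs.rightInvSeq ω).count t : ZMod 2) = (cs.rightInvSeq ω').count t := by
  have key : ∀ ω : List B, cs.lift ⟨cs.signedConj, cs.signedConj_isLiftable⟩ (cs.wordProd ω) =
      (ω.map cs.signedConj).prod := by
    intro ω
    induction ω with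
    | nil => simp
    | cons i ω ih => rw [wordProd_cons, map_mul, ih, lift_apply_simple]; simp
  have h1 := key ω
  rw [h, key ω'] at h1
  have h2 := congrArg Prod.snd (congrFun h1 (t, 0))
  rw [signedConj_word, signedConj_word] at h2
  simpa using h2.symm

/-! ### Descents of the longest element of a finite dihedral parabolic subgroup -/

theorem inv_wordProd_alternatingWord (i j : B) (n : ℕ) :
    (cs.wordProd (alternatingWord i j n))⁻¹ =
      if Even n then cs.wordProd (alternatingWord j i n)
      else cs.wordProd (alternatingWord i j n) := by
  induction n generalizing i j with
  | zero => simp [alternatingWord]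
  | succ n ih =>
    have hi := alternatingWord_succ' i j n
    have hj := alternatingWord_succ' j i n
    rw [alternatingWord_succ i j, wordProd_concat, mul_inv_rev, inv_simple, ih,
      ← wordProd_concat, ← alternatingWord_succ, hi, hj]
    by_cases h : Even n <;> simp [Nat.even_add_one, h, wordProd_cons]

theorem isLeftDescent_wordProd_braidWord {a b : B} (hm : 3 ≤ M a b) :
    cs.IsLeftDescent (cs.wordProd (alternatingWord a b (M a b))) b := by
  classical
  have hbraid : cs.wordProd (alternatingWord b a (M a b)) =
      cs.wordProd (alternatingWord a b (M a b)) := by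
    have := cs.wordProd_braidWord_eq a b
    rw [braidWord, braidWord, M.symmetric b a] at this
    exact this.symm
  have hinv : (cs.wordProd (alternatingWord a b (M a b)))⁻¹ =
      cs.wordProd (alternatingWord a b (M a b)) := by
    rw [inv_wordProd_alternatingWord, hbraid, ite_self]
  obtain ⟨r, hr, hrw⟩ := cs.exists_isReduced (cs.wordProd (alternatingWord a b (M a b)))
  have hcount := cs.count_rightInvSeq_eq hrw (cs.simple b)
  rw [count_rightInvSeq_alternatingWord, Finset.sum_eq_single_of_mem 0 (by simp; omega)] at hcount
  · have hmem : cs.simple b ∈ cs.rightInvSeq r := by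
      rw [← List.count_pos_iff, Nat.pos_iff_ne_zero]
      intro h0
      simp [h0] at hcount
    have := cs.isRightInversion_of_mem_rightInvSeq hr hmem
    rw [isRightInversion_simple_iff_isRightDescent, ← hrw, ← hinv, isRightDescent_inv_iff] at this
    exact this
  · intro k hk hk0
    rw [if_neg]
    rw [mul_eq_left]
    exact cs.simple_mul_simple_pow_ne_one hm (Nat.pos_of_ne_zero hk0) (Finset.mem_range.1 hk)

end CoxeterSystem

/-- if a fully commutative `w` has a reduced word `a :: b :: l'` with
`m(a,b) ≥ 3`, then in the coset decomposition with respect to `I = {a, b}` the factor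
`w_I` is not the longest element of `W_I` (so `w` lies in a left `{a,b}`-string, its
`w_I`-factor having length at least 2), and the lower left star operation removes the
leftmost letter, yielding `b :: l'`. -/
theorem stmt4 {B W : Type*} [Group W] {M : CoxeterMatrix B} (cs : CoxeterSystem M W)
    (a b : B) (l' : List B) (hm : 3 ≤ M a b)
    (hred : cs.IsReduced (a :: b :: l'))
    (hfc : FullyCommutative cs (cs.wordProd (a :: b :: l'))) :
    ∀ u : W, CosetFactor cs ({a, b} : Set B) u (cs.wordProd (a :: b :: l')) →
      u ≠ cs.wordProd (alternatingWord a b (M a b)) ∧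
      2 ≤ cs.length u ∧
      cs.simple a * cs.wordProd (a :: b :: l') = cs.wordProd (b :: l') := by
  intro u hu
  obtain ⟨hmem, hdesc, hlen⟩ := hu
  have hb := cs.not_isLeftDescent_of_fullyCommutative hm hred hfc
  have hwa : cs.simple a * cs.wordProd (a :: b :: l') = cs.wordProd (b :: l') := by
    rw [cs.wordProd_cons, cs.simple_mul_simple_cancel_left]
  refine ⟨?_, ?_, hwa⟩
  · rintro rfl
    have hu := cs.isLeftDescent_wordProd_braidWord hm
    apply hb
    rw [CoxeterSystem.IsLeftDescent] at hu ⊢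
    have h := cs.length_mul_le (cs.simple b * cs.wordProd (alternatingWord a b (M a b)))
      ((cs.wordProd (alternatingWord a b (M a b)))⁻¹ * cs.wordProd (a :: b :: l'))
    rw [mul_assoc, mul_inv_cancel_left] at h
    omega
  · have hred' : cs.IsReduced (b :: l') := hred.drop 1
    have hred'' : cs.IsReduced l' := hred.drop 2
    by_contra! hlt
    rcases (by omega : cs.length u = 0 ∨ cs.length u = 1) with h | h
    · rw [cs.length_eq_zero_iff] at h
      subst h
      apply hdesc a (by simp)
      rw [inv_one, one_mul, CoxeterSystem.IsLeftDescent, hwa, hred.eq, hred'.eq]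
      simp
    · obtain ⟨c, rfl⟩ := cs.length_eq_one_iff.1 h
      rw [cs.inv_simple] at hlen hdesc
      rcases cs.mem_of_simple_mem_closure hmem with rfl | rfl
      · apply hdesc b (by simp)
        rw [hwa, CoxeterSystem.IsLeftDescent, cs.wordProd_cons,
          cs.simple_mul_simple_cancel_left, ← cs.wordProd_cons, hred'.eq, hred''.eq]
        simp
      · apply hb
        rw [CoxeterSystem.IsLeftDescent]
        omega
end

section
/- Let w be a fully commutative element of a Coxeter group such that w is star reducible, via a sequence of lower (left or right) star operations, to a product w' = s₁⋯s_k of k mutually commuting generators. Then the maximum antichain size in the heap of w equals k, i.e., n(w) = k. -/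
open CoxeterSystem

def heapLe {B : Type*} (M : CoxeterMatrix B) (ω : List B) :
    Fin ω.length → Fin ω.length → Prop :=
  Relation.ReflTransGen fun i j => (i : ℕ) < (j : ℕ) ∧ M (ω.get i) (ω.get j) ≠ 2

def IsHeapAntichain {B : Type*} (M : CoxeterMatrix B) (ω : List B)
    (A : Finset (Fin ω.length)) : Prop :=
  ∀ i ∈ A, ∀ j ∈ A, i ≠ j → ¬ heapLe M ω i j

noncomputable def heapN {B : Type*} (M : CoxeterMatrix B) (ω : List B) : ℕ :=
  sSup {n | ∃ A : Finset (Fin ω.length), IsHeapAntichain M ω A ∧ A.card = n}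

/-- A single lower (left or right) star operation on a fully commutative element:
removal of the leftmost letter of a reduced word starting with two non-commuting
letters, or of the rightmost letter of a reduced word ending in two non-commuting
letters. -/
def LowerStarStep {B W : Type*} [Group W] {M : CoxeterMatrix B}
    (cs : CoxeterSystem M W) (x y : W) : Prop :=
  ∃ (l : List B) (a b : B), 3 ≤ M a b ∧
    ((cs.IsReduced (a :: b :: l) ∧ x = cs.wordProd (a :: b :: l) ∧ y = cs.wordProd (b :: l)) ∨
     (cs.IsReduced (l ++ [b, a]) ∧ x = cs.wordProd (l ++ [b, a]) ∧ y = cs.wordProd (l ++ [b])))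

section Heap

variable {B : Type*} {M : CoxeterMatrix B}

lemma heapLe.le {ω : List B} {i j : Fin ω.length} (h : heapLe M ω i j) : i ≤ j := by
  induction h with
  | refl => exact le_rfl
  | tail _ h ih => exact ih.trans h.1.le

lemma heapLe.map {ω ω' : List B} (f : Fin ω.length → Fin ω'.length)
    (hf : ∀ p q, p < q → M (ω.get p) (ω.get q) ≠ 2 →
      f p < f q ∧ M (ω'.get (f p)) (ω'.get (f q)) ≠ 2)
    {i j : Fin ω.length} (h : heapLe M ω i j) : heapLe M ω' (f i) (f j) := by
  induction h with
  | refl => exact .refl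
  | tail _ h ih => exact .tail ih (hf _ _ h.1 h.2)

lemma heapLe.map_swap {ω ω' : List B} (f : Fin ω.length → Fin ω'.length)
    (hf : ∀ p q, p < q → M (ω.get p) (ω.get q) ≠ 2 →
      f q < f p ∧ M (ω'.get (f q)) (ω'.get (f p)) ≠ 2)
    {i j : Fin ω.length} (h : heapLe M ω i j) : heapLe M ω' (f j) (f i) := by
  induction h with
  | refl => exact .refl
  | tail _ h ih => exact .head (hf _ _ h.1 h.2) ih

lemma heapLe_cons_succ_iff {a : B} {ω : List B} {i j : Fin ω.length} :
    heapLe M (a :: ω) i.succ j.succ ↔ heapLe M ω i j := by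
  constructor
  · suffices ∀ q, heapLe M (a :: ω) i.succ q → ∀ j : Fin ω.length, q = j.succ →
        heapLe M ω i j from fun h ↦ this _ h j rfl
    intro q h
    induction h with
    | refl =>
      intro j hj
      rw [Fin.succ_injective _ hj]
      exact .refl
    | @tail p q hp hpq ih =>
      rintro j rfl
      obtain ⟨p', rfl⟩ := Fin.exists_succ_eq.2 fun hp0 : p = 0 ↦
        absurd (heapLe.le hp) (by simp [hp0])
      exact (ih p' rfl).tail ⟨by simpa using hpq.1, by simpa using hpq.2⟩
  · exact heapLe.map (ω' := a :: ω) Fin.succ fun p q hpq hM ↦ ⟨by simpa using hpq, by simpa using hM⟩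

lemma heapN_le_of_map {ω ω' : List B} (g : Fin ω.length → Fin ω'.length)
    (hg : ∀ A, IsHeapAntichain M ω A → ∀ i ∈ A, ∀ j ∈ A, i ≠ j → ¬ heapLe M ω' (g i) (g j)) :
    heapN M ω ≤ heapN M ω' := by
  classical
  refine csSup_le ⟨0, ∅, by simp [IsHeapAntichain], rfl⟩ ?_
  rintro n ⟨A, hA, rfl⟩
  refine le_csSup ⟨ω'.length, ?_⟩ ⟨A.image g, ?_, ?_⟩
  · rintro n ⟨A', -, rfl⟩
    simpa using A'.card_le_univ
  · intro i hi j hj hij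
    obtain ⟨p, hp, rfl⟩ := Finset.mem_image.1 hi
    obtain ⟨q, hq, rfl⟩ := Finset.mem_image.1 hj
    exact hg A hA p hp q hq fun h ↦ hij (h ▸ rfl)
  · refine Finset.card_image_of_injOn fun i hi j hj hij ↦ by_contra fun hne ↦ ?_
    exact hg A hA i hi j hj hne (hij ▸ .refl)

lemma CommStep.heapN_le {ω ω' : List B} (h : CommStep M ω ω') : heapN M ω ≤ heapN M ω' := by
  obtain ⟨u, v, a, b, hab, rfl, rfl⟩ := h
  let f : ℕ → ℕ := fun n ↦ if n = u.length then n + 1 else if n = u.length + 1 then n - 1 else n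
  have hf (x y : B) (n : Fin (u ++ x :: y :: v).length) : f n < (u ++ y :: x :: v).length := by
    have := n.2
    simp only [List.length_append, List.length_cons, f] at this ⊢
    grind
  have hff (n : ℕ) : f (f n) = n := by grind
  have hf_lt (p q : ℕ) (hpq : p < q) (hne : ¬ (p = u.length ∧ q = u.length + 1)) :
      f p < f q := by
    simp only [f]
    split_ifs <;> omega
  have hget (x y : B) (n : Fin (u ++ x :: y :: v).length) :
      (u ++ y :: x :: v).get ⟨f n, hf x y n⟩ = (u ++ x :: y :: v).get n := by
    obtain ⟨n, hn⟩ := n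
    simp only [List.get_eq_getElem, f]
    grind
  refine heapN_le_of_map (fun n ↦ ⟨f n, hf a b n⟩) fun A hA i hi j hj hij h ↦ hA i hi j hj hij ?_
  have key := heapLe.map (ω' := u ++ a :: b :: v) (fun n ↦ ⟨f n, hf b a n⟩)
    (fun p q hlt hM ↦ ⟨?_, by simpa only [hget] using hM⟩) h
  · simpa only [hff] using key
  · obtain ⟨p, hp⟩ := p
    obtain ⟨q, hq⟩ := q
    simp only [List.get_eq_getElem, Fin.mk_lt_mk] at hlt hM
    have : ¬ (p = u.length ∧ q = u.length + 1) := by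
      rintro ⟨rfl, rfl⟩
      refine hM ?_
      rw [M.symmetric]
      simpa [List.getElem_append_right] using hab
    exact Fin.mk_lt_mk.2 (hf_lt p q hlt this)

lemma CommStep.symm {ω ω' : List B} (h : CommStep M ω ω') : CommStep M ω' ω := by
  obtain ⟨u, v, a, b, hab, rfl, rfl⟩ := h
  exact ⟨u, v, b, a, by rwa [M.symmetric], rfl, rfl⟩

lemma commEquiv_of_commStep {ω ω' : List B} (h : CommStep M ω ω') : CommEquiv M ω ω' :=
  .single (.inl h)

lemma CommEquiv.of_map (φ : List B → List B)
    (hφ : ∀ l l', CommStep M l l' → CommEquiv M (φ l) (φ l'))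
    {ω ω' : List B} (h : CommEquiv M ω ω') : CommEquiv M (φ ω) (φ ω') := by
  induction h with
  | refl => exact .refl
  | tail _ h ih => exact ih.trans (h.elim (hφ _ _) fun h ↦ hφ _ _ h.symm)

lemma CommEquiv.heapN_eq {ω ω' : List B} (h : CommEquiv M ω ω') : heapN M ω = heapN M ω' := by
  induction h with
  | refl => rfl
  | tail _ h ih =>
    exact ih.trans (h.elim (fun h ↦ h.heapN_le.antisymm h.symm.heapN_le)
      fun h ↦ h.symm.heapN_le.antisymm h.heapN_le)

lemma CommEquiv.reverse {ω ω' : List B} (h : CommEquiv M ω ω') :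
    CommEquiv M ω.reverse ω'.reverse := by
  refine h.of_map List.reverse ?_
  rintro _ _ ⟨u, v, a, b, hab, rfl, rfl⟩
  exact commEquiv_of_commStep
    ⟨v.reverse, u.reverse, b, a, by rwa [M.symmetric], by simp, by simp⟩

lemma CommEquiv.of_cons {a : B} {ω ω' : List B} (h : CommEquiv M (a :: ω) (a :: ω')) :
    CommEquiv M ω ω' := by
  classical
  suffices CommEquiv M ((a :: ω).erase a) ((a :: ω').erase a) by simpa using this
  refine h.of_map (·.erase a) ?_
  rintro _ _ ⟨u, v, c, d, hcd, rfl, rfl⟩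
  have hne : c ≠ d := by
    rintro rfl
    simp at hcd
  by_cases hu : a ∈ u
  · simp only [List.erase_append_left _ hu]
    exact commEquiv_of_commStep ⟨_, v, c, d, hcd, rfl, rfl⟩
  · simp only [List.erase_append_right _ hu]
    by_cases hc : c = a
    · subst hc
      rw [List.erase_cons_head, List.erase_cons_tail (by simpa using hne.symm),
        List.erase_cons_head]
      exact .refl
    · by_cases hd : d = a
      · subst hd
        rw [List.erase_cons_head, List.erase_cons_tail (by simpa using hne),
          List.erase_cons_head]
        exact .refl
      · simp only [List.erase_cons_tail (by simpa using hc : ¬(c == a) = true),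
          List.erase_cons_tail (by simpa using hd : ¬(d == a) = true)]
        exact commEquiv_of_commStep ⟨u, _, c, d, hcd, rfl, rfl⟩

lemma heapN_reverse_le (ω : List B) : heapN M ω ≤ heapN M ω.reverse := by
  let f : Fin ω.length → Fin ω.reverse.length := fun i ↦ ⟨ω.length - 1 - i, by simp; omega⟩
  let f' : Fin ω.reverse.length → Fin ω.length := fun i ↦
    ⟨ω.length - 1 - i, by have := i.2; simp at this; omega⟩
  have hff (i : Fin ω.length) : f' (f i) = i := by ext; simp [f, f']; omega
  have hget (i : Fin ω.reverse.length) : ω.get (f' i) = ω.reverse.get i := by simp [f']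
  refine heapN_le_of_map f fun A hA i hi j hj hij h ↦ hA j hj i hi hij.symm ?_
  rw [← hff i, ← hff j]
  refine heapLe.map_swap f' (fun p q hlt hM ↦ ⟨?_, ?_⟩) h
  · have hp := p.2
    have hq := q.2
    simp only [List.length_reverse, Fin.lt_def] at hp hq hlt
    simp only [f', Fin.lt_def]
    omega
  · rwa [hget, hget, M.symmetric]

lemma heapN_reverse (ω : List B) : heapN M ω.reverse = heapN M ω :=
  le_antisymm (by simpa using heapN_reverse_le (M := M) ω.reverse) (heapN_reverse_le ω)

lemma heapN_cons_cons {a b : B} (hab : M a b ≠ 2) (ω : List B) :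
    heapN M (a :: b :: ω) = heapN M (b :: ω) := by
  refine le_antisymm ?_ ?_
  · let z : Fin (b :: ω).length := ⟨0, by simp⟩
    have hz : heapLe M (a :: b :: ω) 0 z.succ := .single ⟨by simp, by simpa [z] using hab⟩
    refine heapN_le_of_map (Fin.cases z id) fun A hA i hi j hj hij h ↦ ?_
    cases i using Fin.cases with
    | zero =>
      cases j using Fin.cases with
      | zero => exact hij rfl
      | succ j => exact hA _ hi _ hj hij (hz.trans (heapLe_cons_succ_iff.2 h))
    | succ i =>
      cases j using Fin.cases with
      | zero =>
        have hi0 : i = z := le_antisymm (heapLe.le h) (by simp [z])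
        subst hi0
        exact hA _ hj _ hi hij.symm hz
      | succ j => exact hA _ hi _ hj hij (heapLe_cons_succ_iff.2 h)
  · exact heapN_le_of_map Fin.succ fun A hA i hi j hj hij h ↦
      hA i hi j hj hij (heapLe_cons_succ_iff.1 h)

lemma heapN_append_pair {a b : B} (hab : M a b ≠ 2) (ω : List B) :
    heapN M (ω ++ [b, a]) = heapN M (ω ++ [b]) := by
  rw [← heapN_reverse, ← heapN_reverse (ω ++ [b])]
  simpa using heapN_cons_cons hab ω.reverse

lemma heapN_eq_length {ω : List B} (h : ω.Pairwise fun a b ↦ M a b = 2) :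
    heapN M ω = ω.length := by
  have hle {i j : Fin ω.length} (hij : heapLe M ω i j) : i = j := by
    induction hij with
    | refl => rfl
    | tail _ h' _ => exact absurd (List.pairwise_iff_get.1 h _ _ h'.1) h'.2
  refine IsGreatest.csSup_eq ⟨⟨Finset.univ, fun i _ j _ hij h' ↦ hij (hle h'), by simp⟩, ?_⟩
  rintro n ⟨A, -, rfl⟩
  simpa using A.card_le_univ

end Heap

section GeometricRepresentation

open Real Polynomial.Chebyshev

lemma chebyshev_S_eval_products_eq_zero {m : ℕ} (hm : 3 ≤ m) :
    let t := 2 * cos (2 * π / m)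
    (S ℝ ((m - 2) / 2)).eval t * ((S ℝ ((m - 1) / 2)).eval t + (S ℝ ((m - 3) / 2)).eval t) = 0 ∧
    (S ℝ ((m - 1) / 2)).eval t * ((S ℝ (m / 2)).eval t + (S ℝ ((m - 2) / 2)).eval t) = 0 := by
  intro t
  set θ := 2 * π / m with hθ
  have hm0 : (0 : ℝ) < m := by positivity
  have hsin : sin θ ≠ 0 := by
    refine (sin_pos_of_pos_of_lt_pi (by positivity) ?_).ne'
    rw [hθ, div_lt_iff₀ hm0]
    have : (3 : ℝ) ≤ m := by exact_mod_cast hm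
    nlinarith [pi_pos]
  obtain ⟨p, rfl | rfl⟩ := m.even_or_odd'
  · have h0 : (S ℝ (p - 1)).eval t = 0 := by
      refine (mul_eq_zero.1 ?_).resolve_right hsin
      rw [S_two_mul_real_cos]
      have : (((p : ℤ) - 1 : ℤ) + 1 : ℝ) * θ = π := by
        rw [hθ]
        push_cast at hm0 ⊢
        have : (p : ℝ) ≠ 0 := by rintro h; simp [h] at hm0
        field_simp
        ring
      rw [this, sin_pi]
    have e1 : (((2 * p : ℕ) : ℤ) - 2) / 2 = p - 1 := by omega
    have e2 : (((2 * p : ℕ) : ℤ) - 1) / 2 = p - 1 := by omega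
    rw [e1, e2, h0]
    simp
  · have h0 : (S ℝ p).eval t + (S ℝ (p - 1)).eval t = 0 := by
      refine (mul_eq_zero.1 ?_).resolve_right hsin
      rw [add_mul, S_two_mul_real_cos, S_two_mul_real_cos]
      have : (((p : ℤ) - 1 : ℤ) + 1 : ℝ) * θ = 2 * π - ((p : ℤ) + 1 : ℝ) * θ := by
        rw [hθ]
        push_cast at hm0 ⊢
        field_simp
        ring
      rw [this, sin_two_pi_sub, add_neg_cancel]
    have e1 : (((2 * p + 1 : ℕ) : ℤ) - 2) / 2 = p - 1 := by omega
    have e2 : (((2 * p + 1 : ℕ) : ℤ) - 1) / 2 = p := by omega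
    have e3 : (((2 * p + 1 : ℕ) : ℤ) - 3) / 2 = p - 1 := by omega
    have e4 : (((2 * p + 1 : ℕ) : ℤ)) / 2 = p := by omega
    rw [e1, e2, e3, e4, h0]
    simp

namespace CoxeterMatrix

variable {B : Type*} (M : CoxeterMatrix B)

/-- The linear form on `B →₀ ℝ` sending `v` to twice its pairing with the simple root `i` under
the standard bilinear form. -/
noncomputable def simpleCoroot (i : B) : Module.Dual ℝ (B →₀ ℝ) :=
  Finsupp.linearCombination ℝ fun j ↦ -2 * cos (π / M i j)

lemma simpleCoroot_single (i j : B) :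
    M.simpleCoroot i (Finsupp.single j 1) = -2 * cos (π / M i j) := by
  simp [simpleCoroot]

lemma simpleCoroot_single_self (i : B) : M.simpleCoroot i (Finsupp.single i 1) = 2 := by
  simp [simpleCoroot_single]

lemma simpleCoroot_single_of_eq_two {i j : B} (h : M i j = 2) :
    M.simpleCoroot i (Finsupp.single j 1) = 0 := by
  simp [simpleCoroot_single, h]

/-- The reflection of `B →₀ ℝ` in the simple root `i`. -/
noncomputable def simpleReflection (i : B) : (B →₀ ℝ) ≃ₗ[ℝ] (B →₀ ℝ) :=
  Module.reflection (M.simpleCoroot_single_self i)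

lemma simpleReflection_apply (i : B) (v : B →₀ ℝ) :
    M.simpleReflection i v = v - M.simpleCoroot i v • Finsupp.single i 1 :=
  Module.reflection_apply _ _

lemma isLiftable_simpleReflection : M.IsLiftable M.simpleReflection := by
  intro i j
  obtain rfl | hij := eq_or_ne i j
  · rw [M.diagonal, pow_one]
    ext1 v
    exact Module.involutive_reflection (M.simpleCoroot_single_self i) v
  obtain h0 | h2 | h3 : M i j = 0 ∨ M i j = 2 ∨ 3 ≤ M i j := by
    have := M.off_diagonal i j hij
    omega
  · rw [h0, pow_zero]
  · have hij' := M.simpleCoroot_single_of_eq_two h2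
    have hji' := M.simpleCoroot_single_of_eq_two ((M.symmetric j i).trans h2)
    rw [h2]
    refine LinearEquiv.ext fun v ↦ ?_
    simp only [pow_two, LinearEquiv.mul_apply, simpleReflection_apply, map_sub, map_smul, hij',
      hji', M.simpleCoroot_single_self, LinearEquiv.coe_one, id_eq]
    module
  · refine LinearEquiv.ext fun v ↦ ?_
    have ht : 2 * cos (2 * π / M i j) = M.simpleCoroot i (Finsupp.single j 1) *
        M.simpleCoroot j (Finsupp.single i 1) - 2 := by
      rw [simpleCoroot_single, simpleCoroot_single, M.symmetric j i, mul_div_assoc, cos_two_mul]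
      ring
    obtain ⟨hA, hB⟩ := chebyshev_S_eval_products_eq_zero h3
    have := Module.reflection_mul_reflection_pow_apply (M.simpleCoroot_single_self i)
      (M.simpleCoroot_single_self j) (M i j) v _ ht
    rw [hA, hB] at this
    simp only [zero_smul, add_zero] at this
    exact this

end CoxeterMatrix

end GeometricRepresentation

namespace CoxeterSystem

variable {B W : Type*} [Group W] {M : CoxeterMatrix B} (cs : CoxeterSystem M W)

/-- The geometric representation of a Coxeter group. -/
noncomputable def geometricRep : W →* ((B →₀ ℝ) ≃ₗ[ℝ] (B →₀ ℝ)) :=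
  cs.lift ⟨M.simpleReflection, M.isLiftable_simpleReflection⟩

lemma geometricRep_wordProd_cons (a : B) (ω : List B) (v : B →₀ ℝ) :
    cs.geometricRep (cs.wordProd (a :: ω)) v =
      M.simpleReflection a (cs.geometricRep (cs.wordProd ω) v) := by
  rw [wordProd_cons, map_mul, LinearEquiv.mul_apply]
  have : cs.geometricRep (cs.simple a) = M.simpleReflection a :=
    cs.lift_apply_simple M.isLiftable_simpleReflection a
  rw [this]

lemma geometricRep_wordProd_apply_of_notMem {ω : List B} {i : B} (hi : i ∉ ω) (v : B →₀ ℝ) :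
    cs.geometricRep (cs.wordProd ω) v i = v i := by
  induction ω with
  | nil => simp
  | cons a ω ih =>
    simp only [List.mem_cons, not_or] at hi
    rw [geometricRep_wordProd_cons, M.simpleReflection_apply]
    simp [ih hi.2, Finsupp.single_eq_of_ne hi.1]

lemma geometricRep_wordProd_single_of_forall {ω : List B} {i : B} (h : ∀ a ∈ ω, M a i = 2) :
    cs.geometricRep (cs.wordProd ω) (Finsupp.single i 1) = Finsupp.single i 1 := by
  induction ω with
  | nil => simp
  | cons a ω ih =>
    rw [List.forall_mem_cons] at h
    rw [geometricRep_wordProd_cons, ih h.2, M.simpleReflection_apply,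
      M.simpleCoroot_single_of_eq_two h.1, zero_smul, sub_zero]

lemma geometricRep_wordProd_single_of_mem {ω : List B} (h : ω.Pairwise fun a b ↦ M a b = 2)
    {i : B} (hi : i ∈ ω) :
    cs.geometricRep (cs.wordProd ω) (Finsupp.single i 1) = -Finsupp.single i 1 := by
  induction ω with
  | nil => simp at hi
  | cons a ω ih =>
    rw [List.pairwise_cons] at h
    rw [geometricRep_wordProd_cons]
    obtain rfl | hi := List.mem_cons.1 hi
    · rw [geometricRep_wordProd_single_of_forall cs fun b hb ↦ (M.symmetric b i).trans (h.1 b hb),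
        M.simpleReflection_apply, M.simpleCoroot_single_self]
      module
    · rw [ih h.2 hi, map_neg, M.simpleReflection_apply,
        M.simpleCoroot_single_of_eq_two (h.1 i hi), zero_smul, sub_zero]

lemma isReduced_of_pairwise_commute {ω : List B} (h : ω.Pairwise fun a b ↦ M a b = 2) :
    cs.IsReduced ω := by
  obtain ⟨l, hl, hlω⟩ := cs.exists_isReduced (cs.wordProd ω)
  have hnodup : ω.Nodup := h.imp fun {a b} hab e ↦ by simp [e] at hab
  have hsub : ω ⊆ l := by
    intro i hi
    by_contra hil
    have h1 := cs.geometricRep_wordProd_apply_of_notMem hil (Finsupp.single i 1)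
    rw [← hlω, cs.geometricRep_wordProd_single_of_mem h hi] at h1
    norm_num at h1
  refine le_antisymm (cs.length_wordProd_le ω) ?_
  rw [hlω, hl.eq]
  exact (hnodup.subperm hsub).length_le

end CoxeterSystem

section FullyCommutative

variable {B W : Type*} [Group W] {M : CoxeterMatrix B} {cs : CoxeterSystem M W}

lemma FullyCommutative.heapN_eq {w : W} (hw : FullyCommutative cs w) {l l' : List B}
    (hl : cs.IsReduced l) (hlw : cs.wordProd l = w)
    (hl' : cs.IsReduced l') (hlw' : cs.wordProd l' = w) : heapN M l = heapN M l' :=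
  (hw l l' hl hlw hl' hlw').heapN_eq

lemma isReduced_cons_of_wordProd_eq {a : B} {l l' : List B} (h : cs.IsReduced (a :: l))
    (hl' : cs.IsReduced l') (heq : cs.wordProd l' = cs.wordProd l) :
    cs.IsReduced (a :: l') := by
  have h1 := h.eq
  have h2 : cs.IsReduced l := by simpa using h.drop 1
  rw [CoxeterSystem.wordProd_cons, List.length_cons, ← h2.eq] at h1
  rw [CoxeterSystem.IsReduced, CoxeterSystem.wordProd_cons, List.length_cons, ← hl'.eq, heq, h1]

lemma FullyCommutative.of_cons {a : B} {l : List B}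
    (hfc : FullyCommutative cs (cs.wordProd (a :: l))) (h : cs.IsReduced (a :: l)) :
    FullyCommutative cs (cs.wordProd l) := by
  intro l₁ l₂ h₁ e₁ h₂ e₂
  exact (hfc (a :: l₁) (a :: l₂) (isReduced_cons_of_wordProd_eq h h₁ e₁)
    (by simp [CoxeterSystem.wordProd_cons, e₁]) (isReduced_cons_of_wordProd_eq h h₂ e₂)
    (by simp [CoxeterSystem.wordProd_cons, e₂])).of_cons

lemma FullyCommutative.inv {w : W} (hfc : FullyCommutative cs w) : FullyCommutative cs w⁻¹ := by
  intro l₁ l₂ h₁ e₁ h₂ e₂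
  simpa using (hfc l₁.reverse l₂.reverse h₁.reverse (by simp [e₁]) h₂.reverse
    (by simp [e₂])).reverse

lemma FullyCommutative.of_append_singleton {a : B} {l : List B}
    (hfc : FullyCommutative cs (cs.wordProd (l ++ [a]))) (h : cs.IsReduced (l ++ [a])) :
    FullyCommutative cs (cs.wordProd l) := by
  have h1 : FullyCommutative cs (cs.wordProd (a :: l.reverse)) := by
    simpa [← CoxeterSystem.wordProd_reverse] using hfc.inv
  simpa using (h1.of_cons (by simpa using h.reverse)).inv

lemma LowerStarStep.exists_heapN_eq {x y : W} (h : LowerStarStep cs x y)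
    (hx : FullyCommutative cs x) :
    FullyCommutative cs y ∧ ∃ l l', cs.IsReduced l ∧ cs.wordProd l = x ∧
      cs.IsReduced l' ∧ cs.wordProd l' = y ∧ heapN M l = heapN M l' := by
  obtain ⟨l, a, b, hab, ⟨hl, rfl, rfl⟩ | ⟨hl, rfl, rfl⟩⟩ := h
  · exact ⟨hx.of_cons hl, _, _, hl, rfl, by simpa using hl.drop 1, rfl,
      heapN_cons_cons (by omega) l⟩
  · have hassoc : l ++ [b, a] = (l ++ [b]) ++ [a] := by simp
    refine ⟨(hassoc ▸ hx).of_append_singleton (hassoc ▸ hl), _, _, hl, rfl, ?_, rfl,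
      heapN_append_pair (by omega) l⟩
    rw [hassoc] at hl
    have := hl.take (l ++ [b]).length
    rwa [List.take_left] at this

end FullyCommutative

/-- if a fully commutative `w` is star reducible (by a sequence of lower
star operations) to a product of `k` mutually commuting generators, then the maximal
antichain size of the heap of `w` is `k`, i.e. `n(w) = k`. -/
theorem stmt16 {B W : Type*} [Group W] {M : CoxeterMatrix B} (cs : CoxeterSystem M W)
    (w : W) (hfc : FullyCommutative cs w)
    (k : ℕ) (σ : Fin k → B) (hinj : Function.Injective σ)
    (hcomm : ∀ i j, i ≠ j → M (σ i) (σ j) = 2)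
    (hred : Relation.ReflTransGen (LowerStarStep cs) w (cs.wordProd (List.ofFn σ))) :
    ∀ l : List B, cs.IsReduced l → cs.wordProd l = w → heapN M l = k := by
  have hpw : (List.ofFn σ).Pairwise fun a b ↦ M a b = 2 :=
    List.pairwise_ofFn.2 fun i j hij ↦ hcomm i j hij.ne
  induction hred using Relation.ReflTransGen.head_induction_on with
  | refl =>
    intro l hl hlw
    rw [hfc.heapN_eq hl hlw (cs.isReduced_of_pairwise_commute hpw) rfl, heapN_eq_length hpw,
      List.length_ofFn]
  | head h _ ih =>
    intro l hl hlw
    obtain ⟨hfc', l₁, l₂, h₁, e₁, h₂, e₂, heq⟩ := h.exists_heapN_eq hfc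
    rw [hfc.heapN_eq hl hlw h₁ e₁, heq, ih hfc' l₂ h₂ e₂]
end
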